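/- If S ⊆ Q is a compact weakly infinite dimensional subset of the Hilbert cube, then the complement Q \ S is path connected. -/

import Mathlib

open Set

/-- A separator between `A` and `B` in a topological space: a closed set `L` whose
complement is the union of two disjoint open sets containing `A` and `B` respectively. -/
def IsSeparator {X : Type*} [TopologicalSpace X] (A B L : Set X) : Prop :=
  IsClosed L ∧ ∃ U V : Set X, IsOpen U ∧ IsOpen V ∧ Disjoint U V ∧
    A ⊆ U ∧ B ⊆ V ∧ Lᶜ = U ∪ V

/-- A family of pairs of sets is essential if every choice of separators has
nonempty intersection. -/
def IsEssentialFamily {X : Type*} [TopologicalSpace X] {Γ : Type*}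
    (A B : Γ → Set X) : Prop :=
  ∀ L : Γ → Set X, (∀ i, IsSeparator (A i) (B i) (L i)) → (⋂ i, L i).Nonempty

/-- A space is strongly infinite dimensional if it admits a countably infinite
essential family of pairs of disjoint closed subsets. -/
def StronglyInfiniteDimensional (X : Type*) [TopologicalSpace X] : Prop :=
  ∃ A B : ℕ → Set X,
    (∀ n, IsClosed (A n) ∧ IsClosed (B n) ∧ Disjoint (A n) (B n)) ∧
    IsEssentialFamily A B

/-- The Hilbert cube `Q = [-1,1]^ℕ`. -/
abbrev HilbertCube : Type := ℕ → Set.Icc (-1 : ℝ) 1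

/-- The negative face `W_i^- = {x ∈ Q : x_i = -1}`. -/
def negFace (i : ℕ) : Set HilbertCube := {x | (x i : ℝ) = -1}

/-- The positive face `W_i^+ = {x ∈ Q : x_i = 1}`. -/
def posFace (i : ℕ) : Set HilbertCube := {x | (x i : ℝ) = 1}


namespace HC

variable {ι : Type} [DecidableEq ι]

/-- move one step in direction `j` -/
def shift (v : ι → ℕ) (j : ι) : ι → ℕ := Function.update v j (v j + 1)

lemma shift_comm (v : ι → ℕ) (j k : ι) : shift (shift v j) k = shift (shift v k) j := by
  by_cases h : j = k
  · rw [h]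
  · simp only [shift]
    rw [Function.update_of_ne (Ne.symm h), Function.update_of_ne h, Function.update_comm h]

/-- cup product of the coboundaries of the labels in the list, as a cubical cochain -/
def cup : List ((ι → ℕ) → ZMod 2) → Finset ι → (ι → ℕ) → ZMod 2
  | [], J, _ => if J = ∅ then 1 else 0
  | f :: ls, J, v => ∑ j ∈ J, (f (shift v j) + f v) * cup ls (J.erase j) (shift v j)

lemma sum_symm_zero (J : Finset ι) (F : ι → ι → ZMod 2) (hF : ∀ j k, F j k = F k j) :
    ∑ j ∈ J, ∑ k ∈ J.erase j, F j k = 0 := by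
  have h1 : ∑ j ∈ J, ∑ k ∈ J.erase j, F j k = ∑ j ∈ J, (∑ k ∈ J, F j k - F j j) :=
    Finset.sum_congr rfl fun j hj => by rw [Finset.sum_erase_eq_sub hj]
  rw [h1]
  clear h1
  induction J using Finset.induction_on with
  | empty => simp
  | insert a s ha ih =>
    rw [Finset.sum_insert ha, Finset.sum_insert ha]
    have : ∑ x ∈ s, (∑ k ∈ insert a s, F x k - F x x)
        = ∑ x ∈ s, F a x + ∑ x ∈ s, (∑ k ∈ s, F x k - F x x) := by
      rw [← Finset.sum_add_distrib]
      refine Finset.sum_congr rfl fun x _ => ?_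
      rw [Finset.sum_insert ha, hF x a]; ring
    rw [this, ih]
    have h2 := CharTwo.add_self_eq_zero (∑ x ∈ s, F a x)
    linear_combination h2

lemma sum_swap (J : Finset ι) (F : ι → ι → ZMod 2) :
    ∑ j ∈ J, ∑ k ∈ J.erase j, F j k = ∑ j ∈ J, ∑ k ∈ J.erase j, F k j := by
  refine Finset.sum_comm' fun x y => ?_
  simp only [Finset.mem_erase]
  tauto

lemma cup_closed (ls : List ((ι → ℕ) → ZMod 2)) : ∀ (J : Finset ι) (v : ι → ℕ),
    ∑ j ∈ J, (cup ls (J.erase j) (shift v j) + cup ls (J.erase j) v) = 0 := by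
  induction ls with
  | nil =>
    intro J v
    refine Finset.sum_eq_zero fun j _ => ?_
    simp only [cup]
    exact CharTwo.add_self_eq_zero _
  | cons f ls ih =>
    intro J v
    simp only [cup]
    have e1 : ∑ j ∈ J, ∑ k ∈ J.erase j,
        f (shift (shift v j) k) * cup ls ((J.erase j).erase k) (shift (shift v j) k) = 0 := by
      refine sum_symm_zero J _ fun j k => ?_
      rw [shift_comm, Finset.erase_right_comm]
    have e2 : ∑ j ∈ J, ∑ k ∈ J.erase j,
        f (shift v j) * (cup ls ((J.erase j).erase k) (shift (shift v j) k)
          + cup ls ((J.erase j).erase k) (shift v j)) = 0 := by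
      refine Finset.sum_eq_zero fun j _ => ?_
      rw [← Finset.mul_sum, ih, mul_zero]
    have e3 : ∑ j ∈ J, ∑ k ∈ J.erase j,
        f v * (cup ls ((J.erase j).erase k) (shift v k) + cup ls ((J.erase j).erase k) v) = 0 := by
      refine Finset.sum_eq_zero fun j _ => ?_
      rw [← Finset.mul_sum, ih, mul_zero]
    have e4 : ∑ j ∈ J, ∑ k ∈ J.erase j, f v * cup ls ((J.erase j).erase k) v = 0 := by
      refine sum_symm_zero J _ fun j k => ?_
      rw [Finset.erase_right_comm]
    have e5 := sum_swap J (fun j k => f (shift v j) * cup ls ((J.erase j).erase k) (shift v j))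
    simp only [mul_add, add_mul, Finset.sum_add_distrib] at *
    have e6 : ∑ j ∈ J, ∑ k ∈ J.erase j, f (shift v k) * cup ls ((J.erase k).erase j) (shift v k)
       = ∑ j ∈ J, ∑ k ∈ J.erase j, f (shift v k) * cup ls ((J.erase j).erase k) (shift v k) := by
      simp only [Finset.erase_right_comm]
    rw [e6] at e5
    linear_combination e1 + e2 + e3 - e4 - e5 

lemma cup_cons (f : (ι → ℕ) → ZMod 2) (ls : List ((ι → ℕ) → ZMod 2)) (J : Finset ι) (v : ι → ℕ) :
    cup (f :: ls) J v = ∑ j ∈ J, (f (shift v j) * cup ls (J.erase j) (shift v j)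
      - f v * cup ls (J.erase j) v) := by
  have h := cup_closed ls J v
  have : f v * ∑ j ∈ J, (cup ls (J.erase j) (shift v j) + cup ls (J.erase j) v) = 0 := by
    rw [h, mul_zero]
  rw [Finset.mul_sum] at this
  simp only [cup]
  rw [← sub_eq_zero, ← Finset.sum_sub_distrib, ← this]
  refine Finset.sum_congr rfl fun j _ => ?_
  ring

lemma cup_eq_zero (ls : List ((ι → ℕ) → ZMod 2)) (f : (ι → ℕ) → ZMod 2) (hf : f ∈ ls) (i : ι) :
    ∀ (J : Finset ι) (_ : i ∉ J) (v : ι → ℕ) (_ : ∀ x y : ι → ℕ, x i = v i → y i = v i → f x = f y),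
    cup ls J v = 0 := by
  induction ls with
  | nil => simp at hf
  | cons g ls ih =>
    intro J hJ v hv
    simp only [cup]
    refine Finset.sum_eq_zero fun j hj => ?_
    have hij : i ≠ j := fun h => hJ (h ▸ hj)
    have hs : shift v j i = v i := by simp [shift, hij]
    rcases List.mem_cons.1 hf with rfl | h
    · rw [hv (shift v j) v hs rfl, CharTwo.add_self_eq_zero, zero_mul]
    · rw [ih h _ (by simp [hJ]) _ (by rw [hs]; exact hv), mul_zero]

lemma cup_ne_zero (ls : List ((ι → ℕ) → ZMod 2)) :
    ∀ (J : Finset ι) (v : ι → ℕ), cup ls J v ≠ 0 → ∀ f ∈ ls, ∃ x y : ι → ℕ,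
      f x = 0 ∧ f y = 1 ∧ ∀ k, v k ≤ x k ∧ v k ≤ y k ∧
        x k ≤ v k + (if k ∈ J then 1 else 0) ∧ y k ≤ v k + (if k ∈ J then 1 else 0) := by
  induction ls with
  | nil => simp
  | cons g ls ih =>
    intro J v hv f hf
    obtain ⟨j, hj, hne⟩ := Finset.exists_ne_zero_of_sum_ne_zero hv
    have h1 := left_ne_zero_of_mul hne
    have h2 := right_ne_zero_of_mul hne
    have key : ∀ k, v k ≤ shift v j k ∧ shift v j k ≤ v k + (if k ∈ J then 1 else 0) := by
      intro k
      by_cases h : k = j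
      · subst h; simp [shift, hj]
      · simp [shift, h]
    rcases List.mem_cons.1 hf with rfl | h
    · have : ∀ a b : ZMod 2, a + b ≠ 0 → (a = 0 ∧ b = 1) ∨ (b = 0 ∧ a = 1) := by decide
      rcases this _ _ h1 with h | h
      · exact ⟨_, _, h.1, h.2, fun k => ⟨(key k).1, le_rfl, (key k).2, by omega⟩⟩
      · exact ⟨_, _, h.1, h.2, fun k => ⟨le_rfl, (key k).1, by omega, (key k).2⟩⟩
    · obtain ⟨x, y, hx, hy, hk⟩ := ih _ _ h2 f h
      refine ⟨x, y, hx, hy, fun k => ?_⟩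
      have := hk k
      by_cases hkj : k = j
      · subst hkj
        simp [shift, hj] at this ⊢
        omega
      · simp [shift, hkj] at this ⊢
        exact this

/-- sum over a box of side `m` in the directions of the list -/
def boxSum (m : ℕ) : List ι → ((ι → ℕ) → ZMod 2) → (ι → ℕ) → ZMod 2
  | [], f, c => f c
  | j :: l, f, c => ∑ t ∈ Finset.range m, boxSum m l f (Function.update c j t)

lemma boxSum_perm (m : ℕ) {l l' : List ι} (h : l.Perm l') (f : (ι → ℕ) → ZMod 2) :
    l.Nodup → ∀ c, boxSum m l f c = boxSum m l' f c := by
  induction h with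
  | nil => simp
  | cons x _ ih =>
    intro hn c
    simp only [boxSum]
    exact Finset.sum_congr rfl fun t _ => ih (List.nodup_cons.1 hn).2 _
  | swap x y l =>
    intro hn c
    simp only [boxSum]
    rw [Finset.sum_comm]
    have : x ≠ y := by rintro rfl; simp at hn
    refine Finset.sum_congr rfl fun t _ => Finset.sum_congr rfl fun s _ => ?_
    rw [Function.update_comm this]
  | trans h1 _ ih1 ih2 =>
    intro hn c
    rw [ih1 hn, ih2 (h1.nodup_iff.1 hn)]

lemma boxSum_sub (m : ℕ) (l : List ι) (f g : (ι → ℕ) → ZMod 2) : ∀ c,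
    boxSum m l (fun v => f v - g v) c = boxSum m l f c - boxSum m l g c := by
  induction l with
  | nil => simp [boxSum]
  | cons j l ih => intro c; simp only [boxSum, ih, Finset.sum_sub_distrib]

lemma boxSum_sum (m : ℕ) (l : List ι) (J : Finset ι) (f : ι → (ι → ℕ) → ZMod 2) : ∀ c,
    boxSum m l (fun v => ∑ j ∈ J, f j v) c = ∑ j ∈ J, boxSum m l (f j) c := by
  induction l with
  | nil => simp [boxSum]
  | cons j l ih =>
    intro c
    simp only [boxSum, ih]
    rw [Finset.sum_comm]

lemma boxSum_congr (m : ℕ) (l : List ι) (f g : (ι → ℕ) → ZMod 2) : ∀ c,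
    (∀ v : ι → ℕ, (∀ k ∉ l, v k = c k) → f v = g v) → boxSum m l f c = boxSum m l g c := by
  induction l with
  | nil => intro c h; exact h c fun _ _ => rfl
  | cons j l ih =>
    intro c h
    simp only [boxSum]
    refine Finset.sum_congr rfl fun t _ => ih _ fun v hv => h v fun k hk => ?_
    simp only [List.mem_cons, not_or] at hk
    rw [hv k hk.2, Function.update_of_ne hk.1]

lemma boxSum_zero (m : ℕ) (l : List ι) : ∀ c, boxSum m l (fun _ => 0) c = 0 := by
  induction l with
  | nil => simp [boxSum]
  | cons j l ih => intro c; simp [boxSum, ih]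

lemma boxSum_shift (m : ℕ) (l : List ι) (g : (ι → ℕ) → ZMod 2) (j : ι) (hj : j ∉ l) : ∀ c,
    boxSum m l (fun v => g (shift v j)) c = boxSum m l g (shift c j) := by
  induction l with
  | nil => simp [boxSum]
  | cons i l ih =>
    intro c
    simp only [List.mem_cons, not_or] at hj
    simp only [boxSum]
    refine Finset.sum_congr rfl fun t _ => ?_
    rw [ih hj.2]
    congr 1
    simp only [shift]
    rw [Function.update_of_ne hj.1, Function.update_comm hj.1]

lemma boxSum_telescope (m : ℕ) (l : List ι) (hn : l.Nodup) (g : (ι → ℕ) → ZMod 2) (j : ι)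
    (hj : j ∈ l) (c : ι → ℕ) :
    boxSum m l (fun v => g (shift v j) - g v) c =
      boxSum m (l.erase j) g (Function.update c j m)
        - boxSum m (l.erase j) g (Function.update c j 0) := by
  rw [boxSum_perm m (List.perm_cons_erase hj) _ hn]
  simp only [boxSum]
  rw [← Finset.sum_range_sub (fun t => boxSum m (l.erase j) g (Function.update c j t))]
  refine Finset.sum_congr rfl fun t _ => ?_
  rw [boxSum_sub, boxSum_shift _ _ _ _ hn.not_mem_erase]
  simp [shift]

lemma boxSum_cup (m : ℕ) (lam : ι → (ι → ℕ) → ZMod 2) (h0 : ∀ i v, v i = 0 → lam i v = 0)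
    (h1 : ∀ i v, v i = m → lam i v = 1) (l : List ι) : l.Nodup → ∀ c,
    boxSum m l (cup (l.map lam) l.toFinset) c = 1 := by
  induction l with
  | nil => simp [boxSum, cup]
  | cons i l ih =>
    intro hn c
    have hil := (List.nodup_cons.1 hn).1
    have e1 : cup ((i :: l).map lam) (i :: l).toFinset = fun v => ∑ j ∈ (i :: l).toFinset,
        ((fun w => lam i w * cup (l.map lam) ((i :: l).toFinset.erase j) w) (shift v j)
          - (fun w => lam i w * cup (l.map lam) ((i :: l).toFinset.erase j) w) v) := by
      ext v
      rw [List.map_cons, cup_cons]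
    rw [e1, boxSum_sum m (i :: l) (i :: l).toFinset (fun j v =>
      ((fun w => lam i w * cup (l.map lam) ((i :: l).toFinset.erase j) w) (shift v j)
          - (fun w => lam i w * cup (l.map lam) ((i :: l).toFinset.erase j) w) v))]
    rw [Finset.sum_eq_single i]
    · refine (boxSum_telescope m (i :: l) hn
        (fun w => lam i w * cup (l.map lam) ((i :: l).toFinset.erase i) w) i (by simp) c).trans ?_
      rw [List.erase_cons_head]
      have e2 : (i :: l).toFinset.erase i = l.toFinset := by
        rw [List.toFinset_cons, Finset.erase_insert (by simpa using hil)]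
      rw [e2, boxSum_congr m l _ (fun _ => 0) (Function.update c i 0), boxSum_zero,
        boxSum_congr m l _ (cup (l.map lam) l.toFinset) (Function.update c i m),
        ih (List.nodup_cons.1 hn).2, sub_zero]
      · intro v hv
        rw [h1 i v (by rw [hv i hil]; simp), one_mul]
      · intro v hv
        rw [h0 i v (by rw [hv i hil]; simp), zero_mul]
    · intro j hj hji
      have hj' : j ∈ i :: l := by simpa using hj
      have hjl : j ∈ l := by simpa [hji] using hj
      refine (boxSum_telescope m (i :: l) hn
        (fun w => lam i w * cup (l.map lam) ((i :: l).toFinset.erase j) w) j hj' c).trans ?_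
      have hz : ∀ t, (∀ x y : ι → ℕ, x j = t → y j = t → lam j x = lam j y) → 
          boxSum m ((i :: l).erase j) (fun w => lam i w * cup (l.map lam) ((i :: l).toFinset.erase j) w)
            (Function.update c j t) = 0 := by
        intro t ht
        rw [boxSum_congr m _ _ (fun _ => 0), boxSum_zero]
        intro v hv
        have hvj : v j = t := by rw [hv j hn.not_mem_erase]; simp
        rw [cup_eq_zero _ (lam j) (List.mem_map_of_mem hjl) j _ (by simp) v (by rw [hvj]; exact ht),
          mul_zero]
      rw [hz m, hz 0, sub_zero]
      · intro x y hx hy; rw [h0 _ _ hx, h0 _ _ hy]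
      · intro x y hx hy; rw [h1 _ _ hx, h1 _ _ hy]
    · simp

lemma exists_of_boxSum_ne_zero (m : ℕ) (l : List ι) (f : (ι → ℕ) → ZMod 2) : ∀ c,
    boxSum m l f c ≠ 0 → ∃ v, f v ≠ 0 := by
  intro c h
  by_contra! hc
  apply h
  rw [boxSum_congr m l f (fun _ => 0) c (fun v _ => hc v), boxSum_zero]

/-- combinatorial Poincaré–Miranda -/
lemma comb (m : ℕ) (lam : ι → (ι → ℕ) → ZMod 2) (h0 : ∀ i v, v i = 0 → lam i v = 0)
    (h1 : ∀ i v, v i = m → lam i v = 1) (l : List ι) (hn : l.Nodup) :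
    ∃ v : ι → ℕ, ∀ i ∈ l, ∃ x y : ι → ℕ, lam i x = 0 ∧ lam i y = 1 ∧
      ∀ k, v k ≤ x k ∧ v k ≤ y k ∧ x k ≤ v k + 1 ∧ y k ≤ v k + 1 := by
  have h := boxSum_cup m lam h0 h1 l hn 0
  obtain ⟨v, hv⟩ := exists_of_boxSum_ne_zero m l _ 0 (by rw [h]; exact one_ne_zero)
  refine ⟨v, fun i hi => ?_⟩
  obtain ⟨x, y, hx, hy, hk⟩ := cup_ne_zero _ _ _ hv (lam i) (List.mem_map_of_mem hi)
  refine ⟨x, y, hx, hy, fun k => ?_⟩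
  have := hk k
  split_ifs at this <;> omega

end HC

namespace HC

open Filter Topology

instance : Fact ((-1 : ℝ) ≤ 1) := ⟨by norm_num⟩

lemma locPath : LocallyPathConnectedSpace HilbertCube := by
  have h1 : LocallyPathConnectedSpace (Set.Icc (-1 : ℝ) 1) :=
    (convex_Icc (-1 : ℝ) 1).locallyPathConnectedSpace
  have h2 : IsPathConnected (univ : Set (Set.Icc (-1 : ℝ) 1)) := by
    rw [← pathConnectedSpace_iff_univ, ← isPathConnected_iff_pathConnectedSpace]
    exact (convex_Icc (-1 : ℝ) 1).isPathConnected ⟨0, by norm_num⟩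
  refine ⟨fun x => hasBasis_self.mpr fun U hU => ?_⟩
  rw [nhds_pi, Filter.mem_pi] at hU
  obtain ⟨I, hI, t, ht, hsub⟩ := hU
  have h3 : ∀ i, ∃ W ∈ 𝓝 (x i), IsPathConnected W ∧ W ⊆ t i := fun i => by
    obtain ⟨W, hW, hWt⟩ := (h1.path_connected_basis (x i)).mem_iff.1 (ht i)
    exact ⟨W, hW.1, hW.2, hWt⟩
  choose W hW hWp hWt using h3
  classical
  refine ⟨univ.pi fun i => if i ∈ I then W i else univ, ?_, ?_, ?_⟩
  · rw [nhds_pi]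
    refine mem_of_superset (Filter.pi_mem_pi hI (s := W) fun i _ => hW i) ?_
    intro y hy i _
    by_cases h : i ∈ I
    · simpa [h] using hy i h
    · simp [h]
  · refine IsPathConnected.pi fun i => ?_
    split_ifs
    · exact hWp i
    · exact h2
  · refine Subset.trans ?_ hsub
    intro y hy i hi
    have := hy i trivial
    simp only [hi, if_true] at this
    exact hWt i this

/-- grid points of the cube -/
noncomputable def grid (m : ℕ) (v : ℕ → ℕ) : HilbertCube :=
  fun k => projIcc (-1 : ℝ) 1 (by norm_num) (-1 + 2 * (v k : ℝ) / (m + 1))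

lemma grid_zero (m : ℕ) (v : ℕ → ℕ) (i : ℕ) (h : v i = 0) : ((grid m v i : Set.Icc (-1 : ℝ) 1) : ℝ) = -1 := by
  simp only [grid, h]
  rw [projIcc_of_le_left] <;> simp

lemma grid_one (m : ℕ) (v : ℕ → ℕ) (i : ℕ) (h : v i = m + 1) : ((grid m v i : Set.Icc (-1 : ℝ) 1) : ℝ) = 1 := by
  have hm : (m : ℝ) + 1 ≠ 0 := by positivity
  simp only [grid, h]
  rw [projIcc_of_right_le]
  push_cast
  rw [mul_div_assoc, div_self hm]; norm_num

lemma grid_dist (m : ℕ) (v w : ℕ → ℕ) (i : ℕ) (h : v i ≤ w i) (h' : w i ≤ v i + 1) :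
    dist (grid m w i) (grid m v i) ≤ 2 / (m + 1) := by
  rw [Subtype.dist_eq, Real.dist_eq]
  refine (abs_projIcc_sub_projIcc _).trans ?_
  have hm : (0 : ℝ) < (m : ℝ) + 1 := by positivity
  have e : (-1 + 2 * (w i : ℝ) / (m + 1)) - (-1 + 2 * (v i : ℝ) / (m + 1))
      = 2 * ((w i : ℝ) - v i) / (m + 1) := by ring
  have a1 : (v i : ℝ) ≤ w i := by exact_mod_cast h
  have a2 : (w i : ℝ) ≤ v i + 1 := by exact_mod_cast h'
  rw [e, abs_of_nonneg (div_nonneg (by linarith) hm.le)]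
  gcongr
  linarith

lemma approx (A B : ℕ → Set HilbertCube) (hA : ∀ i (x : HilbertCube), (x i : ℝ) = -1 → x ∈ A i)
    (hB : ∀ i (x : HilbertCube), (x i : ℝ) = 1 → x ∈ B i)
    (hAB : ∀ i x, x ∈ A i ∨ x ∈ B i) (m : ℕ) :
    ∃ z : HilbertCube, ∀ i < m, ∃ a ∈ A i, ∃ b ∈ B i, ∀ k,
      dist (a k) (z k) ≤ 2 / (m + 1) ∧ dist (b k) (z k) ≤ 2 / (m + 1) := by
  classical
  let lam : ℕ → (ℕ → ℕ) → ZMod 2 := fun i v =>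
    if v i = 0 then 0 else if v i = m + 1 then 1 else if grid m v ∈ A i then 0 else 1
  have l0 : ∀ i v, lam i v = 0 → grid m v ∈ A i := by
    intro i v h
    simp only [lam] at h
    split_ifs at h with c1 c2 c3
    · exact hA i _ (grid_zero m v i c1)
    · exact absurd h one_ne_zero
    · exact c3
    · exact absurd h one_ne_zero
  have l1 : ∀ i v, lam i v = 1 → grid m v ∈ B i := by
    intro i v h
    simp only [lam] at h
    split_ifs at h with c1 c2 c3
    · exact absurd h zero_ne_one
    · exact hB i _ (grid_one m v i c2)
    · exact absurd h zero_ne_one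
    · exact (hAB i _).resolve_left c3
  obtain ⟨v, hv⟩ := comb (m + 1) lam (fun i v h => by simp [lam, h]) (fun i v h => by simp [lam, h])
    (List.range m) List.nodup_range
  refine ⟨grid m v, fun i hi => ?_⟩
  obtain ⟨x, y, hx, hy, hk⟩ := hv i (List.mem_range.2 hi)
  exact ⟨_, l0 i x hx, _, l1 i y hy, fun k =>
    ⟨grid_dist m v x k (hk k).1 (hk k).2.2.1, grid_dist m v y k (hk k).2.1 (hk k).2.2.2⟩⟩

lemma mem_limit (A : Set HilbertCube) (hA : IsClosed A) (i : ℕ) (z : ℕ → HilbertCube)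
    (h : ∀ m, i < m → ∃ a ∈ A, ∀ k, dist (a k) (z m k) ≤ 2 / ((m : ℝ) + 1))
    (φ : ℕ → ℕ) (hφ : StrictMono φ) (w : HilbertCube) (hw : Tendsto (z ∘ φ) atTop (𝓝 w)) :
    w ∈ A := by
  have h' : ∀ m, ∃ a : HilbertCube, i < m → a ∈ A ∧ ∀ k, dist (a k) (z m k) ≤ 2 / ((m : ℝ) + 1) := by
    intro m
    by_cases hm : i < m
    · obtain ⟨a, ha, hk⟩ := h m hm
      exact ⟨a, fun _ => ⟨ha, hk⟩⟩
    · exact ⟨z m, fun h => absurd h hm⟩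
  choose a ha using h'
  have hev : ∀ᶠ m in atTop, i < φ m := hφ.tendsto_atTop.eventually_gt_atTop i
  refine hA.mem_of_tendsto (f := fun m => a (φ m)) (b := atTop) ?_ (hev.mono fun m hm => (ha _ hm).1)
  rw [tendsto_pi_nhds] at hw ⊢
  intro k
  have hk := hw k
  rw [tendsto_iff_dist_tendsto_zero] at hk ⊢
  have hlim : Tendsto (fun m => 2 / ((φ m : ℝ) + 1)) atTop (𝓝 0) := by
    have : Tendsto (fun m : ℕ => 2 / ((m : ℝ) + 1)) atTop (𝓝 0) :=
      tendsto_const_nhds.div_atTop (tendsto_natCast_atTop_atTop.atTop_add tendsto_const_nhds)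
    exact this.comp hφ.tendsto_atTop
  refine squeeze_zero' (Eventually.of_forall fun _ => dist_nonneg) ?_
    (by simpa using hlim.add hk)
  filter_upwards [hev] with m hm
  exact (dist_triangle _ (z (φ m) k) _).trans (add_le_add ((ha _ hm).2 k) le_rfl)

lemma miranda (A B : ℕ → Set HilbertCube) (cA : ∀ i, IsClosed (A i)) (cB : ∀ i, IsClosed (B i))
    (hA : ∀ i (x : HilbertCube), (x i : ℝ) = -1 → x ∈ A i)
    (hB : ∀ i (x : HilbertCube), (x i : ℝ) = 1 → x ∈ B i)
    (hAB : ∀ i x, x ∈ A i ∨ x ∈ B i) : ∃ z, ∀ i, z ∈ A i ∧ z ∈ B i := by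
  choose z hz using approx A B hA hB hAB
  obtain ⟨w, φ, hφ, hw⟩ := CompactSpace.tendsto_subseq z
  refine ⟨w, fun i => ⟨mem_limit _ (cA i) i z ?_ φ hφ w hw, mem_limit _ (cB i) i z ?_ φ hφ w hw⟩⟩
  · intro m hm
    obtain ⟨a, ha, b, hb, hk⟩ := hz m i hm
    exact ⟨a, ha, fun k => (hk k).1⟩
  · intro m hm
    obtain ⟨a, ha, b, hb, hk⟩ := hz m i hm
    exact ⟨b, hb, fun k => (hk k).2⟩

lemma ext_pair {X : Type*} [TopologicalSpace X] [TopologicalSpace.MetrizableSpace X]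
    (E F : Set X) (hE : IsClosed E) (hF : IsClosed F) (nE : E.Nonempty) (nF : F.Nonempty) :
    ∃ A B : Set X, IsClosed A ∧ IsClosed B ∧ E ⊆ A ∧ F ⊆ B ∧ (∀ x, x ∈ A ∨ x ∈ B) ∧
      ∀ x, (x ∈ E ∨ x ∈ F) → x ∈ A → x ∈ B → x ∈ E ∧ x ∈ F := by
  let _ := TopologicalSpace.metrizableSpaceMetric X
  have zE : ∀ x, x ∈ E ↔ Metric.infDist x E = 0 := fun x => hE.mem_iff_infDist_zero nE
  have zF : ∀ x, x ∈ F ↔ Metric.infDist x F = 0 := fun x => hF.mem_iff_infDist_zero nF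
  refine ⟨{x | Metric.infDist x E ≤ Metric.infDist x F}, {x | Metric.infDist x F ≤ Metric.infDist x E},
    isClosed_le (Metric.continuous_infDist_pt _) (Metric.continuous_infDist_pt _),
    isClosed_le (Metric.continuous_infDist_pt _) (Metric.continuous_infDist_pt _), ?_, ?_, ?_, ?_⟩
  · intro x hx
    simp only [mem_ofPred_eq, (zE x).1 hx]
    exact Metric.infDist_nonneg
  · intro x hx
    simp only [mem_ofPred_eq, (zF x).1 hx]
    exact Metric.infDist_nonneg
  · intro x; exact le_total (Metric.infDist x E) (Metric.infDist x F)
  · intro x hx h1 h2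
    have e : Metric.infDist x E = Metric.infDist x F := le_antisymm h1 h2
    rw [zE, zF, ← e, or_self] at hx
    rw [zE, zF, ← e]
    exact ⟨hx, hx⟩

lemma weak (S : Set HilbertCube) (hcpt : IsCompact S) (hS : ¬ StronglyInfiniteDimensional S) (n : ℕ) :
    ∃ A B : ℕ → Set HilbertCube, (∀ k, IsClosed (A k)) ∧ (∀ k, IsClosed (B k)) ∧
      (∀ k (x : HilbertCube), (x (n + k) : ℝ) = -1 → x ∈ A k) ∧
      (∀ k (x : HilbertCube), (x (n + k) : ℝ) = 1 → x ∈ B k) ∧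
      (∀ k x, x ∈ A k ∨ x ∈ B k) ∧ ∀ z ∈ S, ¬ ∀ k, z ∈ A k ∧ z ∈ B k := by
  have cn : ∀ k, IsClosed (negFace k) := fun k =>
    isClosed_eq (continuous_subtype_val.comp (continuous_apply k)) continuous_const
  have cp : ∀ k, IsClosed (posFace k) := fun k =>
    isClosed_eq (continuous_subtype_val.comp (continuous_apply k)) continuous_const
  have dj : ∀ k x, x ∈ negFace k → x ∈ posFace k → False := by
    intro k x h1 h2
    simp only [negFace, posFace, mem_ofPred_eq] at h1 h2
    linarith
  have h1 : ¬ IsEssentialFamily (fun k => ((↑) : S → HilbertCube) ⁻¹' negFace (n + k))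
      (fun k => ((↑) : S → HilbertCube) ⁻¹' posFace (n + k)) := by
    intro h
    refine hS ⟨_, _, fun k => ⟨(cn _).preimage continuous_subtype_val,
      (cp _).preimage continuous_subtype_val, ?_⟩, h⟩
    rw [Set.disjoint_left]
    intro x hx hy
    exact dj _ _ hx hy
  simp only [IsEssentialFamily, not_forall] at h1
  obtain ⟨L, hL, hne⟩ := h1
  have key : ∀ k, ∃ A B : Set HilbertCube, IsClosed A ∧ IsClosed B ∧ negFace (n + k) ⊆ A ∧
      posFace (n + k) ⊆ B ∧ (∀ x, x ∈ A ∨ x ∈ B) ∧ ∀ x : S, x.1 ∈ A → x.1 ∈ B → x ∈ L k := by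
    intro k
    obtain ⟨hLc, U, V, hU, hV, hd, hAU, hBV, hUV⟩ := hL k
    have emb : IsClosedEmbedding ((↑) : S → HilbertCube) := hcpt.isClosed.isClosedEmbedding_subtypeVal
    obtain ⟨A, B, cA, cB, hEA, hFB, hc, hint⟩ := ext_pair
      (((↑) : S → HilbertCube) '' Vᶜ ∪ negFace (n + k)) (((↑) : S → HilbertCube) '' Uᶜ ∪ posFace (n + k))
      ((emb.isClosedMap _ hV.isClosed_compl).union (cn _))
      ((emb.isClosedMap _ hU.isClosed_compl).union (cp _))
      ⟨fun _ => ⟨-1, by norm_num⟩, Or.inr rfl⟩ ⟨fun _ => ⟨1, by norm_num⟩, Or.inr rfl⟩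
    refine ⟨A, B, cA, cB, subset_union_right.trans hEA, subset_union_right.trans hFB, hc, ?_⟩
    intro x hxA hxB
    have hx : x ∉ V ∨ x ∉ U := by
      by_contra! h
      exact Set.disjoint_left.1 hd h.2 h.1
    obtain ⟨h1, h2⟩ := hint x.1 (hx.imp (fun h => Or.inl ⟨x, h, rfl⟩) (fun h => Or.inl ⟨x, h, rfl⟩)) hxA hxB
    have g1 : x ∉ V := by
      rcases h1 with ⟨y, hy, e⟩ | h
      · rwa [Subtype.ext e] at hy
      · exact Set.disjoint_left.1 hd (hAU h)
    have g2 : x ∉ U := by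
      rcases h2 with ⟨y, hy, e⟩ | h
      · rwa [Subtype.ext e] at hy
      · exact Set.disjoint_right.1 hd (hBV h)
    by_contra hxL
    have : x ∈ (L k)ᶜ := hxL
    rw [hUV] at this
    exact this.elim g2 g1
  choose A B cA cB hA hB hc hint using key
  refine ⟨A, B, cA, cB, fun k x h => hA k h, fun k x h => hB k h, hc, fun z hz hall => hne ?_⟩
  exact ⟨⟨z, hz⟩, mem_iInter.2 fun k => hint k ⟨z, hz⟩ (hall k).1 (hall k).2⟩

lemma open_cyl (U : Set HilbertCube) (hU : IsOpen U) (p : HilbertCube) (hp : p ∈ U) :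
    ∃ n, ∀ x : HilbertCube, (∀ j < n, x j = p j) → x ∈ U := by
  obtain ⟨I, u, hu, hsub⟩ := isOpen_pi_iff.1 hU p hp
  refine ⟨I.sup id + 1, fun x hx => hsub fun j hj => ?_⟩
  rw [hx j (Nat.lt_succ_of_le (Finset.le_sup (f := id) hj))]
  exact (hu j hj).2

/-- the segment from `a` (at parameter `-1`) to `b` (at parameter `1`) -/
noncomputable def seg (a b t : Set.Icc (-1 : ℝ) 1) : Set.Icc (-1 : ℝ) 1 :=
  projIcc (-1 : ℝ) 1 (by norm_num) (((1 - (t : ℝ)) * a + (1 + (t : ℝ)) * b) / 2)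

lemma seg_left (a b t : Set.Icc (-1 : ℝ) 1) (h : (t : ℝ) = -1) : seg a b t = a := by
  have : (((1 - (t : ℝ)) * a + (1 + (t : ℝ)) * b) / 2) = a := by rw [h]; ring
  rw [seg, this, projIcc_val]

lemma seg_right (a b t : Set.Icc (-1 : ℝ) 1) (h : (t : ℝ) = 1) : seg a b t = b := by
  have : (((1 - (t : ℝ)) * a + (1 + (t : ℝ)) * b) / 2) = b := by rw [h]; ring
  rw [seg, this, projIcc_val]

/-- a Hilbert cube joining two cylinders -/
noncomputable def tube (n : ℕ) (p q : HilbertCube) (y : HilbertCube) : HilbertCube :=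
  fun j => if j < n then seg (p j) (q j) (y 0) else y (j - n + 1)

lemma continuous_tube (n : ℕ) (p q : HilbertCube) : Continuous (tube n p q) := by
  refine continuous_pi fun j => ?_
  unfold tube seg
  split_ifs
  · refine continuous_projIcc.comp ?_
    fun_prop
  · exact continuous_apply _

lemma preconn (S : Set HilbertCube) (hcpt : IsCompact S) (hS : ¬ StronglyInfiniteDimensional S) :
    IsPreconnected (Sᶜ : Set HilbertCube) := by
  rw [isPreconnected_iff_subset_of_disjoint]
  intro U' V' hU' hV' hcov hdis
  by_contra! hcon
  have ho : IsOpen Sᶜ := hcpt.isClosed.isOpen_compl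
  obtain ⟨q, hqS, hqU⟩ := Set.not_subset.1 hcon.1
  obtain ⟨p, hpS, hpV⟩ := Set.not_subset.1 hcon.2
  have hU : IsOpen (Sᶜ ∩ U') := ho.inter hU'
  have hV : IsOpen (Sᶜ ∩ V') := ho.inter hV'
  obtain ⟨n₁, h₁⟩ := open_cyl _ hU p ⟨hpS, (hcov hpS).resolve_right hpV⟩
  obtain ⟨n₂, h₂⟩ := open_cyl _ hV q ⟨hqS, (hcov hqS).resolve_left hqU⟩
  set n := max n₁ n₂
  obtain ⟨A, B, cA, cB, hA, hB, hc, hno⟩ := weak S hcpt hS n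
  have hct := continuous_tube n p q
  have dis : ∀ x, x ∈ Sᶜ ∩ U' → x ∈ Sᶜ ∩ V' → False := by
    intro x h1 h2
    have : x ∈ Sᶜ ∩ (U' ∩ V') := ⟨h1.1, h1.2, h2.2⟩
    rw [hdis] at this
    exact this
  have ht : ∀ k y, tube n p q y (n + k) = y (k + 1) := by
    intro k y; simp [tube]
  obtain ⟨z, hz⟩ := miranda
    (fun i => tube n p q ⁻¹' (Nat.casesOn i (Sᶜ ∩ V')ᶜ A))
    (fun i => tube n p q ⁻¹' (Nat.casesOn i (Sᶜ ∩ U')ᶜ B))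
    (by rintro (_ | k); exacts [hV.isClosed_compl.preimage hct, (cA k).preimage hct])
    (by rintro (_ | k); exacts [hU.isClosed_compl.preimage hct, (cB k).preimage hct])
    (by
      rintro (_ | k) x hx
      · intro h
        refine dis _ (h₁ _ fun j hj => ?_) h
        have : j < n := lt_of_lt_of_le hj (le_max_left _ _)
        simp only [tube, this, if_true]
        exact seg_left _ _ _ hx
      · exact hA k _ (by rw [ht]; exact hx))
    (by
      rintro (_ | k) x hx
      · intro h
        refine dis _ h (h₂ _ fun j hj => ?_)
        have : j < n := lt_of_lt_of_le hj (le_max_right _ _)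
        simp only [tube, this, if_true]
        exact seg_right _ _ _ hx
      · exact hB k _ (by rw [ht]; exact hx))
    (by
      rintro (_ | k) x
      · by_contra! h
        exact dis (tube n p q x) (not_not.1 h.2) (not_not.1 h.1)
      · exact hc k _)
  refine hno (tube n p q z) ?_ fun k => hz (k + 1)
  by_contra hzS
  exact (hcov hzS).elim (fun h => (hz 0).2 ⟨hzS, h⟩) (fun h => (hz 0).1 ⟨hzS, h⟩)

lemma compl_nonempty (S : Set HilbertCube) (hcpt : IsCompact S)
    (hS : ¬ StronglyInfiniteDimensional S) : (Sᶜ : Set HilbertCube).Nonempty := by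
  by_contra hne
  rw [Set.not_nonempty_iff_eq_empty, Set.compl_empty_iff] at hne
  obtain ⟨A, B, cA, cB, hA, hB, hc, hno⟩ := weak S hcpt hS 0
  simp only [zero_add] at hA hB
  obtain ⟨z, hz⟩ := miranda A B cA cB hA hB hc
  exact hno z (by rw [hne]; trivial) hz

end HC

/-- If `S ⊆ Q` is a compact weakly infinite dimensional subset of the
Hilbert cube, then `Q \ S` is path connected. -/
theorem isPathConnected_compl_of_compact_weaklyInfiniteDimensional
    (S : Set HilbertCube) (hcpt : IsCompact S)
    (hS : ¬ StronglyInfiniteDimensional S) :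
    IsPathConnected (Sᶜ : Set HilbertCube) := by
  have := HC.locPath
  exact hcpt.isClosed.isOpen_compl.isConnected_iff_isPathConnected.1
    ⟨HC.compl_nonempty S hcpt hS, HC.preconn S hcpt hS⟩
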